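/- For every mixed instance on a simple graph, an EFX^+_- allocation always exists. -/

import Mathlib

open Finset

variable {V : Type*} [DecidableEq V]

/-- `e` has strictly positive marginal value (is a *good*) for the valuation `v`
relative to the item set `M`. -/
def IsGoodFor (v : Finset (Sym2 V) → ℝ) (M : Finset (Sym2 V)) (e : Sym2 V) : Prop :=
  ∀ S ⊆ M.erase e, v S < v (insert e S)

/-- `e` has strictly negative marginal value (is a *chore*) for the valuation `v`
relative to the item set `M`. -/
def IsChoreFor (v : Finset (Sym2 V) → ℝ) (M : Finset (Sym2 V)) (e : Sym2 V) : Prop :=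
  ∀ S ⊆ M.erase e, v (insert e S) < v S

/-- `e` has zero marginal value (is a *dummy*) for the valuation `v`
relative to the item set `M`. -/
def IsDummyFor (v : Finset (Sym2 V) → ℝ) (M : Finset (Sym2 V)) (e : Sym2 V) : Prop :=
  ∀ S ⊆ M.erase e, v (insert e S) = v S

/-- A valid instance on a simple graph: the edge set `M` consists of non-loop edges,
every edge is (for every agent) a good, a chore, or a dummy, and every edge not
incident to an agent is a dummy for that agent. -/
def ValidInstance (M : Finset (Sym2 V)) (v : V → Finset (Sym2 V) → ℝ) : Prop :=
  (∀ e ∈ M, ¬ e.IsDiag) ∧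
  (∀ (i : V), ∀ e ∈ M, IsGoodFor (v i) M e ∨ IsChoreFor (v i) M e ∨ IsDummyFor (v i) M e) ∧
  (∀ (i : V), ∀ e ∈ M, i ∉ e → IsDummyFor (v i) M e)

/-- `X` is a (complete) allocation of the items in `M`: bundles are contained in `M`
and every item belongs to exactly one bundle. -/
def IsAllocation (M : Finset (Sym2 V)) (X : V → Finset (Sym2 V)) : Prop :=
  (∀ i, X i ⊆ M) ∧ ∀ e ∈ M, ∃! i, e ∈ X i

/-- Every allocated edge goes to one of its endpoint agents. -/
def IsOrientation (X : V → Finset (Sym2 V)) : Prop :=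
  ∀ i, ∀ e ∈ X i, i ∈ e

/-- Agent `i` envies agent `j`. -/
def Envies (v : V → Finset (Sym2 V) → ℝ) (X : V → Finset (Sym2 V)) (i j : V) : Prop :=
  v i (X i) < v i (X j)

/-- EFX condition on the envied bundle, removing an item whose removal *strictly*
decreases the value (superscript `+`). -/
def CondEnviedStrict (v : V → Finset (Sym2 V) → ℝ) (X : V → Finset (Sym2 V)) : Prop :=
  ∀ i j, Envies v X i j → ∀ e ∈ X j,
    v i ((X j).erase e) < v i (X j) → v i ((X j).erase e) ≤ v i (X i)

/-- EFX condition on the envied bundle, removing an item whose removal weakly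
decreases the value (superscript `0`). -/
def CondEnviedWeak (v : V → Finset (Sym2 V) → ℝ) (X : V → Finset (Sym2 V)) : Prop :=
  ∀ i j, Envies v X i j → ∀ e ∈ X j,
    v i ((X j).erase e) ≤ v i (X j) → v i ((X j).erase e) ≤ v i (X i)

/-- EFX condition on the envious agent's own bundle, removing an item whose removal
*strictly* increases the value (subscript `-`). -/
def CondOwnStrict (v : V → Finset (Sym2 V) → ℝ) (X : V → Finset (Sym2 V)) : Prop :=
  ∀ i j, Envies v X i j → ∀ e ∈ X i,
    v i (X i) < v i ((X i).erase e) → v i (X j) ≤ v i ((X i).erase e)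

/-- EFX condition on the envious agent's own bundle, removing an item whose removal
weakly increases the value (subscript `0`). -/
def CondOwnWeak (v : V → Finset (Sym2 V) → ℝ) (X : V → Finset (Sym2 V)) : Prop :=
  ∀ i j, Envies v X i j → ∀ e ∈ X i,
    v i (X i) ≤ v i ((X i).erase e) → v i (X j) ≤ v i ((X i).erase e)

theorem le_empty_of_no_good (v : Finset (Sym2 V) → ℝ) (M S : Finset (Sym2 V)) (hS : S ⊆ M)
    (h : ∀ e ∈ S, IsChoreFor v M e ∨ IsDummyFor v M e) : v S ≤ v ∅ := by
  induction S using Finset.induction_on with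
  | empty => exact le_rfl
  | insert a S ha ih =>
    have hsub : S ⊆ M.erase a := fun x hx =>
      mem_erase.2 ⟨fun hxa => ha (hxa ▸ hx), hS (mem_insert_of_mem hx)⟩
    have h1 := ih (fun x hx => hS (mem_insert_of_mem hx)) (fun x hx => h x (mem_insert_of_mem hx))
    rcases h a (mem_insert_self a S) with hc | hd
    · exact (hc S hsub).le.trans h1
    · exact (hd S hsub).le.trans h1

theorem empty_le_of_no_chore (v : Finset (Sym2 V) → ℝ) (M S : Finset (Sym2 V)) (hS : S ⊆ M)
    (h : ∀ e ∈ S, IsGoodFor v M e ∨ IsDummyFor v M e) : v ∅ ≤ v S := by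
  induction S using Finset.induction_on with
  | empty => exact le_rfl
  | insert a S ha ih =>
    have hsub : S ⊆ M.erase a := fun x hx =>
      mem_erase.2 ⟨fun hxa => ha (hxa ▸ hx), hS (mem_insert_of_mem hx)⟩
    have h1 := ih (fun x hx => hS (mem_insert_of_mem hx)) (fun x hx => h x (mem_insert_of_mem hx))
    rcases h a (mem_insert_self a S) with hc | hd
    · exact h1.trans (hc S hsub).le
    · exact h1.trans (hd S hsub).ge

/-- For every mixed instance on a simple graph, an EFX⁺₋ allocation
always exists. -/
theorem stmt12 {V : Type*} [Fintype V] [DecidableEq V]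
    (M : Finset (Sym2 V)) (v : V → Finset (Sym2 V) → ℝ)
    (hvalid : ValidInstance M v) :
    ∃ X : V → Finset (Sym2 V),
      IsAllocation M X ∧ CondEnviedStrict v X ∧ CondOwnStrict v X := by
  obtain ⟨hdiag, htri, hinc⟩ := hvalid
  have good_mem : ∀ i, ∀ e ∈ M, IsGoodFor (v i) M e → i ∈ e := by
    intro i e he hg
    by_contra hi
    have h1 := hg ∅ (empty_subset _)
    have h2 := hinc i e he hi ∅ (empty_subset _)
    linarith
  have erase_sub : ∀ S ⊆ M, ∀ e, S.erase e ⊆ M.erase e := fun S hS e => erase_subset_erase e hS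
  by_cases hall : ∃ e ∈ M, ∀ i, IsChoreFor (v i) M e
  · -- only possible with two agents and a single edge
    obtain ⟨e, he, hch⟩ := hall
    have hmem : ∀ i, i ∈ e := by
      intro i
      by_contra hi
      have h1 := hch i ∅ (empty_subset _)
      have h2 := hinc i e he hi ∅ (empty_subset _)
      linarith
    have hM : ∀ f ∈ M, f = e := by
      intro f hf
      have hfd := hdiag f hf
      induction f using Sym2.ind with
      | _ x y =>
        have hxy : x ≠ y := by simpa using hfd
        exact ((Sym2.mem_and_mem_iff hxy).1 ⟨hmem x, hmem y⟩).symm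
    have hne : ∃ a, a ∈ e := by
      induction e using Sym2.ind with
      | _ x y => exact ⟨x, by simp⟩
    obtain ⟨a, -⟩ := hne
    refine ⟨fun i => if i = a then {e} else ∅, ⟨?_, ?_⟩, ?_, ?_⟩
    · intro i
      dsimp only
      split_ifs <;> simp [he]
    · intro f hf
      rw [hM f hf]
      refine ⟨a, by simp, ?_⟩
      intro y hy
      by_contra hya
      simp [hya] at hy
    · intro i j _ f hf hlt
      have h1 := hch i ∅ (empty_subset _)
      by_cases hj : j = a
      · simp only [hj, if_true, mem_singleton] at hf hlt
        subst hf
        simp at hlt h1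
        linarith
      · simp [hj] at hf
    · intro i j henv f hf hlt
      by_cases hi : i = a
      · by_cases hj : j = a
        · subst hi; subst hj
          exact absurd henv (lt_irrefl _)
        · simp only [hi, if_true, mem_singleton] at hf
          subst hf
          simp [hi, hj]
      · simp [hi] at hf
  · push Not at hall
    have howner : ∀ e : Sym2 V, ∃ i, e ∈ M → ¬ IsChoreFor (v i) M e ∧
        ((∃ k, IsGoodFor (v k) M e) → IsGoodFor (v i) M e) := by
      intro e
      by_cases he : e ∈ M
      · by_cases hg : ∃ k, IsGoodFor (v k) M e
        · obtain ⟨k, hk⟩ := hg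
          refine ⟨k, fun _ => ⟨fun hc => ?_, fun _ => hk⟩⟩
          exact lt_asymm (hk ∅ (empty_subset _)) (hc ∅ (empty_subset _))
        · obtain ⟨i, hi⟩ := hall e he
          exact ⟨i, fun _ => ⟨hi, fun h => absurd h hg⟩⟩
      · induction e using Sym2.ind with
        | _ x y => exact ⟨x, fun h => absurd h he⟩
    choose w hw using howner
    have hXsub : ∀ i, M.filter (fun e => w e = i) ⊆ M := fun i => filter_subset _ _
    refine ⟨fun i => M.filter (fun e => w e = i), ⟨hXsub, ?_⟩, ?_, ?_⟩
    · intro e he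
      exact ⟨w e, by simp [he], fun y hy => ((mem_filter.1 hy).2).symm⟩
    · intro i j henv e he hlt
      have hij : i ≠ j := by
        rintro rfl
        exact lt_irrefl _ henv
      -- a good for `i` held by `j` is the edge between them
      have key : ∀ f ∈ M.filter (fun e => w e = j), IsGoodFor (v i) M f → f = s(i, j) := by
        intro f hf hg
        obtain ⟨hfM, hfw⟩ := mem_filter.1 hf
        have h1 := (hw f hfM).2 ⟨i, hg⟩
        rw [hfw] at h1
        exact (Sym2.mem_and_mem_iff hij).1 ⟨good_mem i f hfM hg, good_mem j f hfM h1⟩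
      have heM := hXsub j he
      have heg : IsGoodFor (v i) M e := by
        rcases htri i e heM with h | h | h
        · exact h
        · have := h _ (erase_sub _ (hXsub j) e)
          rw [insert_erase he] at this
          exact absurd hlt (lt_asymm this)
        · have := h _ (erase_sub _ (hXsub j) e)
          rw [insert_erase he] at this
          exact absurd this hlt.ne'
      refine (le_empty_of_no_good (v i) M _ ((erase_subset _ _).trans (hXsub j)) ?_).trans
        (empty_le_of_no_chore (v i) M _ (hXsub i) ?_)
      · intro f hf
        obtain ⟨hfe, hf⟩ := mem_erase.1 hf
        rcases htri i f (hXsub j hf) with h | h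
        · exact absurd ((key f hf h).trans (key e he heg).symm) hfe
        · exact h
      · intro f hf
        obtain ⟨hfM, hfw⟩ := mem_filter.1 hf
        have h1 := (hw f hfM).1
        rw [hfw] at h1
        rcases htri i f hfM with h | h | h
        · exact Or.inl h
        · exact absurd h h1
        · exact Or.inr h
    · intro i j _ e he hlt
      exfalso
      obtain ⟨heM, hew⟩ := mem_filter.1 he
      have h1 := (hw e heM).1
      rw [hew] at h1
      rcases htri i e heM with h | h | h
      · have := h _ (erase_sub _ (hXsub i) e)
        rw [insert_erase he] at this
        exact lt_asymm hlt this
      · exact h1 h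
      · have := h _ (erase_sub _ (hXsub i) e)
        rw [insert_erase he] at this
        exact hlt.ne this
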